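/- Let f : ℝ → ℂ be 2π-periodic of class C³. There exists a constant c > 0, depending only on f and on the filter ρ and not on N or φ, such that for every even integer N ≥ 2 and every discrete function φ with ⟨f(α_·)φ⟩_h = 0: (a) ‖S_h^{−1}(f(α_·)(S_h φ)) + S_h^{−1}((S_h f(α_·))φ) − f(α_·)φ‖_{l²} ≤ c ‖φ‖_{l²}, where S_h f(α_·) denotes S_h applied to the discrete function of samples of f; and (b) ‖S_h^{−1}(f(α_·)φ)‖_{l²} ≤ c ‖φ‖_{l²}, ‖D_h(S_h^{−1}(f(α_·)φ))‖_{l²} ≤ c ‖φ‖_{l²}, and ‖S_h^{−1}(f(α_·)(S_h φ))‖_{l²} ≤ c ‖φ‖_{l²}. -/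

import Mathlib

open scoped BigOperators
open Finset

noncomputable section

/-- Grid spacing `h = 2π/N`. -/
def hgrid (N : ℤ) : ℝ := 2 * Real.pi / N

/-- Grid points `α_j = j h`. -/
def gridPt (N : ℤ) (j : ℤ) : ℝ := j * hgrid N

/-- Index set `{-N/2+1, …, N/2}`. -/
def idxs (N : ℤ) : Finset ℤ := Finset.Icc (-(N / 2) + 1) (N / 2)

/-- Discrete Fourier coefficient `f̂_k`. -/
def dft (N : ℤ) (f : ℤ → ℂ) (k : ℤ) : ℂ :=
  (N : ℂ)⁻¹ * ∑ j ∈ idxs N, f j * Complex.exp (-(Complex.I * (k : ℂ) * (gridPt N j : ℂ)))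

/-- Reconstruction of a discrete function from Fourier coefficients. -/
def idft (N : ℤ) (c : ℤ → ℂ) (j : ℤ) : ℂ :=
  ∑ k ∈ idxs N, c k * Complex.exp (Complex.I * (k : ℂ) * (gridPt N j : ℂ))

/-- The pseudo-spectral derivative `S_h`. -/
def Sh (N : ℤ) (f : ℤ → ℂ) : ℤ → ℂ :=
  idft N fun k => if k = N / 2 then 0 else Complex.I * (k : ℂ) * dft N f k

/-- The pseudo-spectral antiderivative `S_h⁻¹`. -/
def Shinv (N : ℤ) (f : ℤ → ℂ) : ℤ → ℂ :=
  idft N fun k => if k = 0 then 0 else dft N f k / (Complex.I * (k : ℂ))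

/-- The filtered discrete function `f^p`. -/
def filterP (N : ℤ) (ρ : ℝ → ℝ) (f : ℤ → ℂ) : ℤ → ℂ :=
  idft N fun k => (ρ (gridPt N k) : ℂ) * dft N f k

/-- The filtered derivative `D_h`. -/
def Dh (N : ℤ) (ρ : ℝ → ℝ) (f : ℤ → ℂ) : ℤ → ℂ :=
  idft N fun k => Complex.I * (k : ℂ) * (ρ (gridPt N k) : ℂ) * dft N f k

/-- Discrete `l²` norm. -/
def l2norm (N : ℤ) (f : ℤ → ℂ) : ℝ :=
  Real.sqrt (hgrid N * ∑ j ∈ idxs N, ‖f j‖ ^ 2)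

/-- Discrete Hilbert transform `H_h`. -/
def Hh (N : ℤ) (f : ℤ → ℂ) (i : ℤ) : ℂ :=
  ((hgrid N / Real.pi : ℝ) : ℂ) *
    ∑ j ∈ (idxs N).filter (fun j => Odd (j - i)),
      f j * (Real.cot ((gridPt N i - gridPt N j) / 2) : ℂ)

/-- Discrete inner product `(f,g)_h`. -/
def dip (N : ℤ) (f g : ℤ → ℂ) : ℂ :=
  (hgrid N : ℂ) * ∑ j ∈ idxs N, (starRingEnd ℂ) (f j) * g j

/-- Discrete mean `⟨f⟩_h`. -/
def dmean (N : ℤ) (f : ℤ → ℂ) : ℂ :=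
  (N : ℂ)⁻¹ * ∑ j ∈ idxs N, f j

/-- The discrete function of samples of a periodic function. -/
def samples (N : ℤ) (f : ℝ → ℂ) : ℤ → ℂ := fun j => f (gridPt N j)

/-- Fourier coefficient of a `2π`-periodic function. -/
def fourierCoeffP (f : ℝ → ℂ) (k : ℤ) : ℂ :=
  ((2 * Real.pi)⁻¹ : ℝ) * ∫ α in (-Real.pi)..Real.pi, f α * Complex.exp (-(Complex.I * (k : ℂ) * (α : ℂ)))

/-- Sobolev norm `‖f‖_s`. -/
def sobolevNorm (s : ℕ) (f : ℝ → ℂ) : ℝ :=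
  Real.sqrt (∑' k : ℤ, (1 + (k : ℝ) ^ 2) ^ s * ‖fourierCoeffP f k‖ ^ 2)

/-- A filter (cutoff) function for numerical filtering. -/
structure IsFilter (ρ : ℝ → ℝ) : Prop where
  even : ∀ x, ρ (-x) = ρ x
  nonneg : ∀ x, 0 ≤ ρ x
  smooth : ∃ r : ℕ, 2 < r ∧ ContDiff ℝ r ρ
  zero_at_pi : ρ Real.pi = 0
  zero_at_neg_pi : ρ (-Real.pi) = 0
  deriv_zero_at_pi : deriv ρ Real.pi = 0
  deriv_zero_at_neg_pi : deriv ρ (-Real.pi) = 0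
  one_near_zero : ∃ μ : ℝ, 0 < μ ∧ μ < 1 ∧ ∀ x : ℝ, |x| ≤ μ * Real.pi → ρ x = 1

/-!
Write `D` for the forward difference quotient on the grid. On a Fourier mode `e^{ikα}` it acts as
`d_k = (e^{ikh} - 1) / h`, and Jordan's inequality makes `d_k` comparable to `k` for `|kh| ≤ π`.
Hence `S_h` factors through `D` up to a multiplier bounded by `π / 2`: `S_h φ = D ψ` with
`‖ψ‖ ≤ π / 2 ‖φ‖`. Unlike `S_h`, the quotient `D` obeys an exact Leibniz rule, so for `f` bounded and
Lipschitz `f D ψ` is `D` of a function bounded in `l²` plus a remainder bounded in `l²`; as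
`S_h⁻¹ D` is bounded, so is `φ ↦ S_h⁻¹ (f S_h φ)`. For the term `S_h⁻¹ ((S_h f) φ)` only the `l²` norm
of `S_h f` is under control, which suffices because the coefficients `1 / k` of `S_h⁻¹` are square
summable.
-/

open scoped ComplexConjugate NNReal

variable {N : ℤ}

/-! ### The grid and its Fourier modes -/

lemma hgrid_pos (hN : 0 < N) : 0 < hgrid N :=
  div_pos Real.two_pi_pos (by exact_mod_cast hN)

lemma mul_hgrid (hN : N ≠ 0) : (N : ℝ) * hgrid N = 2 * Real.pi :=
  mul_div_cancel₀ _ (by exact_mod_cast hN)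

lemma gridPt_add_one (N j : ℤ) : gridPt N (j + 1) = gridPt N j + hgrid N := by
  simp [gridPt, add_mul]

lemma pos_of_mem_idxs {k : ℤ} (hk : k ∈ idxs N) : 0 < N := by
  rw [idxs, mem_Icc] at hk
  lia

lemma zero_mem_idxs (hN : 0 < N) (hE : Even N) : 0 ∈ idxs N := by
  obtain ⟨n, rfl⟩ := hE
  rw [idxs, mem_Icc]
  lia

lemma card_idxs (hN : 0 ≤ N) (hE : Even N) : ((idxs N).card : ℤ) = N := by
  obtain ⟨n, rfl⟩ := hE
  rw [idxs, Int.card_Icc]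
  lia

lemma abs_sub_lt_of_mem_idxs {k l : ℤ} (hk : k ∈ idxs N) (hl : l ∈ idxs N) : |k - l| < N := by
  rw [idxs, mem_Icc] at hk hl
  rw [abs_lt]
  lia

lemma abs_gridPt_le_pi {k : ℤ} (hk : k ∈ idxs N) : |gridPt N k| ≤ Real.pi := by
  have hN := pos_of_mem_idxs hk
  have hkN : |2 * k| ≤ N := by
    rw [idxs, mem_Icc] at hk
    rw [abs_le]
    lia
  have hkN' : 2 * |(k : ℝ)| ≤ N := by
    simpa [abs_mul] using (by exact_mod_cast hkN : ((|2 * k| : ℤ) : ℝ) ≤ N)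
  rw [gridPt, abs_mul, abs_of_pos (hgrid_pos hN)]
  linarith [mul_le_mul_of_nonneg_right hkN' (hgrid_pos hN).le, mul_hgrid hN.ne']

lemma sum_Icc_add_one_sub {E : Type*} [AddCommGroup E] (F : ℤ → E) {a b : ℤ} (hab : a ≤ b) :
    ∑ j ∈ Icc a b, (F (j + 1) - F j) = F (b + 1) - F a := by
  induction b, hab using Int.leInduction with
  | base => simp
  | succ b hb ih =>
    rw [← insert_Icc_right_eq_Icc_add_one (by lia), sum_insert (by simp), ih,
      sub_add_sub_cancel]

lemma sum_idxs_add_one {E : Type*} [AddCommGroup E] (hN : 0 < N) (hE : Even N) {F : ℤ → E}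
    (hF : Function.Periodic F N) : ∑ j ∈ idxs N, F (j + 1) = ∑ j ∈ idxs N, F j := by
  obtain ⟨n, rfl⟩ := hE
  rw [← sub_eq_zero, ← sum_sub_distrib, idxs, sum_Icc_add_one_sub F (by lia), sub_eq_zero,
    ← hF (-((n + n) / 2) + 1)]
  congr 1
  lia

/-- The Fourier mode `α ↦ e^{ikα}` sampled at the grid point `α_j`. -/
def fourierMode (N k j : ℤ) : ℂ := Complex.exp (Complex.I * (k : ℂ) * (gridPt N j : ℂ))

lemma fourierMode_eq_exp_I_mul_ofReal (N k j : ℤ) :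
    fourierMode N k j = Complex.exp (Complex.I * ((k * j * hgrid N : ℝ) : ℂ)) := by
  simp only [fourierMode, gridPt, mul_assoc, Complex.ofReal_mul, Complex.ofReal_intCast]

lemma fourierMode_one_right (N k : ℤ) :
    fourierMode N k 1 = Complex.exp (Complex.I * (gridPt N k : ℂ)) := by
  rw [fourierMode_eq_exp_I_mul_ofReal, Int.cast_one, mul_one, gridPt]

lemma fourierMode_comm (N k j : ℤ) : fourierMode N k j = fourierMode N j k := by
  simp only [fourierMode_eq_exp_I_mul_ofReal, mul_comm (k : ℝ)]

lemma fourierMode_zero_left (N j : ℤ) : fourierMode N 0 j = 1 := by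
  simp [fourierMode]

lemma fourierMode_add_left (N k l j : ℤ) :
    fourierMode N (k + l) j = fourierMode N k j * fourierMode N l j := by
  simp only [fourierMode, ← Complex.exp_add, Int.cast_add, mul_add, add_mul]

lemma fourierMode_add_right (N k i j : ℤ) :
    fourierMode N k (i + j) = fourierMode N k i * fourierMode N k j := by
  simp only [fourierMode_comm N k, fourierMode_add_left]

lemma norm_fourierMode (N k j : ℤ) : ‖fourierMode N k j‖ = 1 := by
  rw [fourierMode_eq_exp_I_mul_ofReal, Complex.norm_exp_I_mul_ofReal]

lemma conj_fourierMode (N k j : ℤ) : conj (fourierMode N k j) = fourierMode N (-k) j := by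
  simp [fourierMode, ← Complex.exp_conj]

lemma fourierMode_self_right (hN : N ≠ 0) (k : ℤ) : fourierMode N k N = 1 := by
  rw [fourierMode_eq_exp_I_mul_ofReal, mul_assoc, mul_hgrid hN, Complex.exp_eq_one_iff]
  exact ⟨k, by push_cast; ring⟩

lemma fourierMode_periodic (hN : N ≠ 0) (k : ℤ) : Function.Periodic (fourierMode N k) N := by
  intro j
  rw [fourierMode_add_right, fourierMode_self_right hN, mul_one]

lemma fourierMode_one_right_ne_one {k : ℤ} (hk : k ≠ 0) (hkN : |k| < N) :
    fourierMode N k 1 ≠ 1 := by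
  have hN : (N : ℂ) ≠ 0 := by exact_mod_cast ((abs_nonneg k).trans_lt hkN).ne'
  rw [fourierMode_one_right, Ne, Complex.exp_eq_one_iff]
  rintro ⟨n, hn⟩
  have hkn : (k : ℂ) = n * N := by
    simp only [gridPt, hgrid] at hn
    push_cast at hn
    field_simp at hn
    linear_combination hn
  have hdvd : N ∣ k := Dvd.intro_left n (by exact_mod_cast hkn.symm)
  exact hk (Int.eq_zero_of_abs_lt_dvd hdvd hkN)

lemma sum_fourierMode_sub (hE : Even N) {k l : ℤ} (hk : k ∈ idxs N) (hl : l ∈ idxs N) :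
    ∑ j ∈ idxs N, fourierMode N (k - l) j = if k = l then (N : ℂ) else 0 := by
  have hN := pos_of_mem_idxs hk
  split_ifs with hkl
  · simp only [hkl, sub_self, fourierMode_zero_left, sum_const, nsmul_eq_mul, mul_one]
    exact_mod_cast card_idxs hN.le hE
  · have hshift := sum_idxs_add_one hN hE (fourierMode_periodic hN.ne' (k - l))
    simp only [fourierMode_add_right, ← sum_mul] at hshift
    have hne := fourierMode_one_right_ne_one (sub_ne_zero.mpr hkl) (abs_sub_lt_of_mem_idxs hk hl)
    exact (mul_right_eq_self₀.mp hshift).resolve_left hne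

/-! ### The discrete `l²` seminorm -/

lemma l2norm_eq_norm_toLp (N : ℤ) (f : ℤ → ℂ) :
    l2norm N f =
      √(hgrid N) * ‖(WithLp.toLp 2 fun j : idxs N => f j : EuclideanSpace ℂ (idxs N))‖ := by
  rw [l2norm, EuclideanSpace.norm_eq, Real.sqrt_mul' _ (by positivity)]
  congr 2
  exact (sum_coe_sort (idxs N) fun j => ‖f j‖ ^ 2).symm

/-- The discrete `l²` norm as a seminorm on sequences; it only sees their values on `idxs N`. -/
def l2Seminorm (N : ℤ) : Seminorm ℂ (ℤ → ℂ) :=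
  Seminorm.of (l2norm N)
    (fun f g => by
      simp only [l2norm_eq_norm_toLp, ← mul_add]
      gcongr
      exact norm_add_le (WithLp.toLp 2 fun j : idxs N => f j : EuclideanSpace ℂ (idxs N))
        (WithLp.toLp 2 fun j : idxs N => g j))
    (fun a f => by
      simp only [l2norm_eq_norm_toLp]
      rw [mul_left_comm, ← norm_smul]
      rfl)

lemma l2norm_nonneg (N : ℤ) (f : ℤ → ℂ) : 0 ≤ l2norm N f := Real.sqrt_nonneg _

lemma l2norm_add_le (N : ℤ) (f g : ℤ → ℂ) : l2norm N (f + g) ≤ l2norm N f + l2norm N g :=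
  map_add_le_add (l2Seminorm N) f g

lemma l2norm_sub_le (N : ℤ) (f g : ℤ → ℂ) : l2norm N (f - g) ≤ l2norm N f + l2norm N g :=
  map_sub_le_add (l2Seminorm N) f g

lemma l2norm_le_mul_of_norm_le {f g : ℤ → ℂ} {C : ℝ} (hC : 0 ≤ C)
    (h : ∀ j ∈ idxs N, ‖f j‖ ≤ C * ‖g j‖) : l2norm N f ≤ C * l2norm N g := by
  simp only [l2norm_eq_norm_toLp, mul_left_comm C, EuclideanSpace.norm_eq]
  gcongr
  rw [← Real.sqrt_sq hC, ← Real.sqrt_mul (sq_nonneg C), mul_sum]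
  gcongr with j
  rw [← mul_pow]
  gcongr
  exact h j j.2

lemma l2norm_mul_le {F : ℤ → ℂ} {M : ℝ} (hF : ∀ j, ‖F j‖ ≤ M) (φ : ℤ → ℂ) :
    l2norm N (F * φ) ≤ M * l2norm N φ := by
  refine l2norm_le_mul_of_norm_le ((norm_nonneg _).trans (hF 0)) fun j _ => ?_
  rw [Pi.mul_apply, norm_mul]
  gcongr
  exact hF j

lemma l2norm_le_of_norm_le (hN : 0 < N) (hE : Even N) {F : ℤ → ℂ} {L : ℝ}
    (hF : ∀ j, ‖F j‖ ≤ L) : l2norm N F ≤ √(2 * Real.pi) * L := by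
  have hcard : ((idxs N).card : ℝ) = N := by exact_mod_cast card_idxs hN.le hE
  have hone : l2norm N 1 = √(2 * Real.pi) := by
    simp [l2norm, hcard, mul_comm (hgrid N), mul_hgrid hN.ne']
  simpa [hone, mul_comm] using l2norm_mul_le (N := N) hF 1

/-! ### The discrete Fourier transform -/

lemma dft_eq_sum (N : ℤ) (f : ℤ → ℂ) (k : ℤ) :
    dft N f k = (N : ℂ)⁻¹ * ∑ j ∈ idxs N, f j * fourierMode N (-k) j := by
  simp [dft, fourierMode]

lemma idft_eq_sum (N : ℤ) (c : ℤ → ℂ) (j : ℤ) :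
    idft N c j = ∑ k ∈ idxs N, c k * fourierMode N k j := rfl

lemma isLinearMap_dft (N : ℤ) : IsLinearMap ℂ (dft N) where
  map_add f g := by
    funext k
    simp only [dft, Pi.add_apply, add_mul, sum_add_distrib, mul_add]
  map_smul a f := by
    funext k
    simp only [dft, Pi.smul_apply, smul_eq_mul, mul_assoc a, ← mul_sum, mul_left_comm _ a]

lemma idft_periodic (hN : N ≠ 0) (c : ℤ → ℂ) : Function.Periodic (idft N c) N := by
  intro j
  simp only [idft_eq_sum, fourierMode_periodic hN _ j]

lemma sum_idft_mul_fourierMode_neg (hE : Even N) (c : ℤ → ℂ) {k : ℤ} (hk : k ∈ idxs N) :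
    ∑ j ∈ idxs N, idft N c j * fourierMode N (-k) j = N * c k := by
  simp only [idft_eq_sum, sum_mul, mul_assoc, ← fourierMode_add_left]
  rw [sum_comm]
  simp only [← mul_sum, ← sub_eq_add_neg]
  rw [sum_eq_single_of_mem k hk, sum_fourierMode_sub hE hk hk, if_pos rfl, mul_comm]
  intro l hl hlk
  rw [sum_fourierMode_sub hE hl hk, if_neg hlk, mul_zero]

lemma dft_idft (hE : Even N) (c : ℤ → ℂ) {k : ℤ} (hk : k ∈ idxs N) : dft N (idft N c) k = c k := by
  have hN : (N : ℂ) ≠ 0 := by exact_mod_cast (pos_of_mem_idxs hk).ne'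
  rw [dft_eq_sum, sum_idft_mul_fourierMode_neg hE c hk, inv_mul_cancel_left₀ hN]

lemma sum_norm_sq_idft (hE : Even N) (c : ℤ → ℂ) :
    ∑ j ∈ idxs N, ‖idft N c j‖ ^ 2 = N * ∑ k ∈ idxs N, ‖c k‖ ^ 2 := by
  have hconj (j : ℤ) :
      conj (idft N c j) = ∑ k ∈ idxs N, conj (c k) * fourierMode N (-k) j := by
    simp only [idft_eq_sum, map_sum, map_mul, conj_fourierMode]
  have hcomplex : ∑ j ∈ idxs N, idft N c j * conj (idft N c j) =
      N * ∑ k ∈ idxs N, c k * conj (c k) := by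
    calc ∑ j ∈ idxs N, idft N c j * conj (idft N c j)
        = ∑ k ∈ idxs N, conj (c k) * ∑ j ∈ idxs N, idft N c j * fourierMode N (-k) j := by
          simp only [hconj, mul_sum, mul_left_comm (idft N c _)]
          exact sum_comm
      _ = ∑ k ∈ idxs N, conj (c k) * (N * c k) :=
          sum_congr rfl fun k hk => by rw [sum_idft_mul_fourierMode_neg hE c hk]
      _ = N * ∑ k ∈ idxs N, c k * conj (c k) := by
          rw [mul_sum]
          exact sum_congr rfl fun k _ => by ring
  simp only [Complex.mul_conj'] at hcomplex
  exact_mod_cast hcomplex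

lemma norm_dft (N : ℤ) (f : ℤ → ℂ) (k : ℤ) :
    ‖dft N f k‖ = |(N : ℝ)|⁻¹ * ‖idft N (fun j => conj (f j)) k‖ := by
  rw [dft_eq_sum, norm_mul, norm_inv, Complex.norm_intCast, idft_eq_sum,
    ← RCLike.norm_conj (∑ j ∈ idxs N, f j * _), map_sum]
  simp only [map_mul, conj_fourierMode, neg_neg, fourierMode_comm N k]

lemma l2norm_idft (hN : 0 ≤ N) (hE : Even N) (c : ℤ → ℂ) :
    l2norm N (idft N c) = √N * l2norm N c := by
  have hN' : (0 : ℝ) ≤ N := by exact_mod_cast hN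
  rw [l2norm, l2norm, sum_norm_sq_idft hE, ← Real.sqrt_mul hN', mul_left_comm]

lemma sqrt_mul_l2norm_dft (hN : 0 < N) (hE : Even N) (f : ℤ → ℂ) :
    √N * l2norm N (dft N f) = l2norm N f := by
  have hN' : (0 : ℝ) < N := by exact_mod_cast hN
  simp only [l2norm, norm_dft, mul_pow, ← mul_sum, sum_norm_sq_idft hE, RCLike.norm_conj,
    abs_of_pos hN', ← Real.sqrt_mul hN'.le]
  congr 1
  field_simp

lemma norm_dft_mul_le (hN : 0 < N) (u φ : ℤ → ℂ) (k : ℤ) :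
    ‖dft N (u * φ) k‖ ≤ (2 * Real.pi)⁻¹ * (l2norm N u * l2norm N φ) := by
  have hh := hgrid_pos hN
  have hinv : (N : ℝ)⁻¹ = (2 * Real.pi)⁻¹ * hgrid N := by
    rw [hgrid, inv_mul_eq_div, div_div_cancel_left' Real.two_pi_pos.ne']
  have hsum : ‖∑ j ∈ idxs N, u j * φ j * fourierMode N (-k) j‖ ≤
      √(∑ j ∈ idxs N, ‖u j‖ ^ 2) * √(∑ j ∈ idxs N, ‖φ j‖ ^ 2) := by
    refine (norm_sum_le _ _).trans ?_
    simp only [norm_mul, norm_fourierMode, mul_one]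
    exact Real.sum_mul_le_sqrt_mul_sqrt (idxs N) (fun j => ‖u j‖) (fun j => ‖φ j‖)
  calc ‖dft N (u * φ) k‖
      = (N : ℝ)⁻¹ * ‖∑ j ∈ idxs N, u j * φ j * fourierMode N (-k) j‖ := by
        rw [dft_eq_sum, norm_mul, norm_inv, Complex.norm_intCast,
          abs_of_pos (by exact_mod_cast hN)]
        rfl
    _ ≤ (2 * Real.pi)⁻¹ * hgrid N *
          (√(∑ j ∈ idxs N, ‖u j‖ ^ 2) * √(∑ j ∈ idxs N, ‖φ j‖ ^ 2)) := by
        rw [hinv]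
        gcongr
    _ = (2 * Real.pi)⁻¹ * (l2norm N u * l2norm N φ) := by
        rw [l2norm, l2norm, Real.sqrt_mul hh.le, Real.sqrt_mul hh.le,
          mul_mul_mul_comm √(hgrid N), Real.mul_self_sqrt hh.le, mul_assoc]

/-! ### Fourier multipliers -/

/-- The operator multiplying the `k`-th discrete Fourier coefficient by the symbol `m k`. -/
def fourierMultiplier (N : ℤ) (m : ℤ → ℂ) : (ℤ → ℂ) →ₗ[ℂ] (ℤ → ℂ) where
  toFun f := idft N fun k => m k * dft N f k
  map_add' f g := by
    funext j
    simp only [(isLinearMap_dft N).map_add, idft, Pi.add_apply, mul_add, add_mul, sum_add_distrib]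
  map_smul' a f := by
    funext j
    simp only [(isLinearMap_dft N).map_smul, idft, Pi.smul_apply, smul_eq_mul, mul_left_comm _ a,
      mul_assoc, ← mul_sum, RingHom.id_apply]

lemma fourierMultiplier_apply (N : ℤ) (m f : ℤ → ℂ) :
    fourierMultiplier N m f = idft N fun k => m k * dft N f k := rfl

lemma fourierMultiplier_congr {m n : ℤ → ℂ} (h : ∀ k ∈ idxs N, m k = n k) (f : ℤ → ℂ) :
    fourierMultiplier N m f = fourierMultiplier N n f := by
  funext j
  simp only [fourierMultiplier_apply, idft]
  exact sum_congr rfl fun k hk => by rw [h k hk]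

lemma fourierMultiplier_fourierMultiplier (hE : Even N) (m n f : ℤ → ℂ) :
    fourierMultiplier N m (fourierMultiplier N n f) = fourierMultiplier N (m * n) f := by
  funext j
  simp only [fourierMultiplier_apply, idft_eq_sum, Pi.mul_apply, mul_assoc (m _)]
  exact sum_congr rfl fun k hk => by rw [← dft_idft hE (fun k => n k * dft N f k) hk]

lemma fourierMultiplier_periodic (hN : N ≠ 0) (m f : ℤ → ℂ) :
    Function.Periodic (fourierMultiplier N m f) N :=
  idft_periodic hN _

lemma l2norm_fourierMultiplier_le (hN : 0 < N) (hE : Even N) {m : ℤ → ℂ} {C : ℝ}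
    (hm : ∀ k ∈ idxs N, ‖m k‖ ≤ C) (f : ℤ → ℂ) :
    l2norm N (fourierMultiplier N m f) ≤ C * l2norm N f := by
  have hC : 0 ≤ C := (norm_nonneg _).trans (hm 0 (zero_mem_idxs hN hE))
  rw [fourierMultiplier_apply, l2norm_idft hN.le hE, ← sqrt_mul_l2norm_dft hN hE f,
    mul_left_comm]
  gcongr
  refine l2norm_le_mul_of_norm_le hC fun k hk => ?_
  rw [norm_mul]
  gcongr
  exact hm k hk

/-- The symbol of `S_h`. -/
def shSymbol (N k : ℤ) : ℂ := if k = N / 2 then 0 else Complex.I * k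

/-- The symbol of `S_h⁻¹`; the convention `0⁻¹ = 0` accounts for the mode `k = 0`. -/
def shinvSymbol (k : ℤ) : ℂ := (Complex.I * k)⁻¹

lemma Sh_eq_fourierMultiplier (N : ℤ) (f : ℤ → ℂ) :
    Sh N f = fourierMultiplier N (shSymbol N) f := by
  simp only [Sh, fourierMultiplier_apply, shSymbol, ite_mul, zero_mul]

lemma Shinv_eq_fourierMultiplier (N : ℤ) (f : ℤ → ℂ) :
    Shinv N f = fourierMultiplier N shinvSymbol f := by
  rw [Shinv, fourierMultiplier_apply]
  congr 1
  funext k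
  split_ifs with hk <;> simp [shinvSymbol, hk, div_eq_inv_mul]

lemma norm_shSymbol_le (N k : ℤ) : ‖shSymbol N k‖ ≤ |(k : ℝ)| := by
  unfold shSymbol
  split_ifs <;> simp

lemma norm_shinvSymbol (k : ℤ) : ‖shinvSymbol k‖ = |(k : ℝ)|⁻¹ := by
  simp [shinvSymbol]

lemma norm_shinvSymbol_le_one (k : ℤ) : ‖shinvSymbol k‖ ≤ 1 := by
  rw [norm_shinvSymbol]
  rcases eq_or_ne k 0 with rfl | hk
  · simp
  · exact inv_le_one_of_one_le₀ (by exact_mod_cast Int.one_le_abs hk)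

lemma l2norm_Shinv_le (hN : 0 < N) (hE : Even N) (f : ℤ → ℂ) :
    l2norm N (Shinv N f) ≤ l2norm N f := by
  rw [Shinv_eq_fourierMultiplier, ← one_mul (l2norm N f)]
  exact l2norm_fourierMultiplier_le hN hE (fun k _ => norm_shinvSymbol_le_one k) f

lemma l2norm_Dh_Shinv_le (hN : 0 < N) (hE : Even N) {ρ : ℝ → ℝ} {R : ℝ}
    (hR : ∀ x, |x| ≤ Real.pi → |ρ x| ≤ R) (f : ℤ → ℂ) :
    l2norm N (Dh N ρ (Shinv N f)) ≤ R * l2norm N f := by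
  rw [Shinv_eq_fourierMultiplier, Dh, ← fourierMultiplier_apply N fun k =>
    Complex.I * (k : ℂ) * (ρ (gridPt N k) : ℂ), fourierMultiplier_fourierMultiplier hE]
  refine l2norm_fourierMultiplier_le hN hE (fun k hk => ?_) f
  have hρk := hR _ (abs_gridPt_le_pi hk)
  rw [Pi.mul_apply, shinvSymbol, mul_right_comm, norm_mul, Complex.norm_real, Real.norm_eq_abs]
  calc ‖Complex.I * k * (Complex.I * k)⁻¹‖ * |ρ (gridPt N k)| ≤ 1 * R := by
        gcongr
        rw [norm_mul, norm_inv]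
        exact mul_inv_le_one
    _ = R := one_mul R

/-! ### The forward difference quotient -/

/-- The forward difference quotient `(g_{j+1} - g_j) / h`. -/
def diffQuot (N : ℤ) (g : ℤ → ℂ) : ℤ → ℂ := fun j => (g (j + 1) - g j) / hgrid N

/-- The symbol `(e^{ikh} - 1) / h` of the forward difference quotient. -/
def diffQuotSymbol (N k : ℤ) : ℂ := (fourierMode N k 1 - 1) / hgrid N

lemma norm_diffQuotSymbol_le (N k : ℤ) : ‖diffQuotSymbol N k‖ ≤ |(k : ℝ)| := by
  rw [diffQuotSymbol, norm_div, Complex.norm_real, fourierMode_one_right]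
  refine div_le_of_le_mul₀ (norm_nonneg _) (abs_nonneg _) ?_
  refine Real.norm_exp_I_mul_ofReal_sub_one_le.trans_eq ?_
  rw [gridPt, norm_mul, Real.norm_eq_abs]

lemma abs_le_mul_norm_diffQuotSymbol {k : ℤ} (hk : k ∈ idxs N) :
    |(k : ℝ)| ≤ Real.pi / 2 * ‖diffQuotSymbol N k‖ := by
  have hh := hgrid_pos (pos_of_mem_idxs hk)
  have hjordan : 2 / Real.pi * |gridPt N k / 2| ≤ |Real.sin (gridPt N k / 2)| := by
    refine Real.mul_abs_le_abs_sin ?_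
    rw [abs_div, abs_two]
    linarith [abs_gridPt_le_pi hk]
  have hnorm : ‖diffQuotSymbol N k‖ = 2 * |Real.sin (gridPt N k / 2)| / hgrid N := by
    rw [diffQuotSymbol, fourierMode_one_right, norm_div,
      Complex.norm_exp_I_mul_ofReal_sub_one, norm_mul, Complex.norm_real]
    simp only [Real.norm_eq_abs, abs_two, abs_of_pos hh]
  calc |(k : ℝ)| = |gridPt N k| / hgrid N := by
        rw [gridPt, abs_mul, abs_of_pos hh, mul_div_cancel_right₀ _ hh.ne']
    _ = Real.pi / 2 * (2 * (2 / Real.pi * |gridPt N k / 2|) / hgrid N) := by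
        rw [abs_div, abs_two]
        field_simp
    _ ≤ Real.pi / 2 * ‖diffQuotSymbol N k‖ := by
        rw [hnorm]
        gcongr

lemma diffQuot_idft (N : ℤ) (c : ℤ → ℂ) :
    diffQuot N (idft N c) = idft N fun k => diffQuotSymbol N k * c k := by
  funext j
  simp only [diffQuot, diffQuotSymbol, idft_eq_sum, ← sum_sub_distrib, sum_div]
  refine sum_congr rfl fun k _ => ?_
  rw [fourierMode_add_right]
  ring

lemma dft_shift (hN : 0 < N) (hE : Even N) {g : ℤ → ℂ} (hg : Function.Periodic g N) (k : ℤ) :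
    dft N (fun j => g (j + 1)) k = fourierMode N k 1 * dft N g k := by
  have hsum := sum_idxs_add_one hN hE (hg.mul (fourierMode_periodic hN.ne' (-k)))
  have hinv : fourierMode N k 1 * fourierMode N (-k) 1 = 1 := by
    rw [← fourierMode_add_left, add_neg_cancel, fourierMode_zero_left]
  simp only [Pi.mul_apply, fourierMode_add_right, ← mul_assoc, ← sum_mul] at hsum
  rw [dft_eq_sum, dft_eq_sum, ← hsum]
  linear_combination -((N : ℂ)⁻¹ * ∑ j ∈ idxs N, g (j + 1) * fourierMode N (-k) j) * hinv

lemma dft_diffQuot (hN : 0 < N) (hE : Even N) {g : ℤ → ℂ} (hg : Function.Periodic g N) (k : ℤ) :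
    dft N (diffQuot N g) k = diffQuotSymbol N k * dft N g k := by
  have hsmul : diffQuot N g = (hgrid N : ℂ)⁻¹ • ((fun j => g (j + 1)) - g) := by
    funext j
    exact div_eq_inv_mul _ _
  rw [hsmul, (isLinearMap_dft N).map_smul, (isLinearMap_dft N).map_sub, Pi.smul_apply,
    Pi.sub_apply, dft_shift hN hE hg, diffQuotSymbol, smul_eq_mul]
  ring

lemma diffQuot_fourierMultiplier (N : ℤ) (m f : ℤ → ℂ) :
    diffQuot N (fourierMultiplier N m f) = fourierMultiplier N (diffQuotSymbol N * m) f := by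
  simp only [fourierMultiplier_apply, diffQuot_idft, Pi.mul_apply, mul_assoc]

lemma fourierMultiplier_diffQuot (hN : 0 < N) (hE : Even N) (m : ℤ → ℂ) {g : ℤ → ℂ}
    (hg : Function.Periodic g N) :
    fourierMultiplier N m (diffQuot N g) = fourierMultiplier N (m * diffQuotSymbol N) g := by
  simp only [fourierMultiplier_apply, dft_diffQuot hN hE hg, Pi.mul_apply, mul_assoc]

lemma mul_diffQuot (N : ℤ) (F ψ : ℤ → ℂ) :
    F * diffQuot N ψ = diffQuot N ((fun j => F (j - 1)) * ψ) -
      (fun j => diffQuot N F (j - 1)) * ψ := by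
  funext j
  simp only [diffQuot, Pi.mul_apply, Pi.sub_apply, add_sub_cancel_right, sub_add_cancel]
  ring

lemma l2norm_Shinv_diffQuot_le (hN : 0 < N) (hE : Even N) {g : ℤ → ℂ}
    (hg : Function.Periodic g N) : l2norm N (Shinv N (diffQuot N g)) ≤ l2norm N g := by
  rw [Shinv_eq_fourierMultiplier, fourierMultiplier_diffQuot hN hE _ hg, ← one_mul (l2norm N g)]
  refine l2norm_fourierMultiplier_le hN hE (fun k _ => ?_) g
  rw [Pi.mul_apply, norm_mul, norm_shinvSymbol]
  exact inv_mul_le_one_of_le₀ (norm_diffQuotSymbol_le N k) (abs_nonneg _)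

/-! ### Comparison of the spectral derivative with the difference quotient -/

/-- The quotient of the symbols of `S_h` and of the forward difference quotient; at `k = 0` it is
`0 / 0 = 0`. -/
def shDiffQuotRatio (N : ℤ) : ℤ → ℂ := shSymbol N / diffQuotSymbol N

lemma norm_shDiffQuotRatio_le {k : ℤ} (hk : k ∈ idxs N) :
    ‖shDiffQuotRatio N k‖ ≤ Real.pi / 2 := by
  rw [shDiffQuotRatio, Pi.div_apply, norm_div]
  exact div_le_of_le_mul₀ (norm_nonneg _) Real.pi_div_two_pos.le
    ((norm_shSymbol_le N k).trans (abs_le_mul_norm_diffQuotSymbol hk))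

lemma shDiffQuotRatio_mul_diffQuotSymbol {k : ℤ} (hk : k ∈ idxs N) :
    shDiffQuotRatio N k * diffQuotSymbol N k = shSymbol N k := by
  refine div_mul_cancel_of_imp fun hd => norm_le_zero_iff.mp ?_
  calc ‖shSymbol N k‖ ≤ Real.pi / 2 * ‖diffQuotSymbol N k‖ :=
        (norm_shSymbol_le N k).trans (abs_le_mul_norm_diffQuotSymbol hk)
    _ = 0 := by rw [hd, norm_zero, mul_zero]

lemma Sh_eq_diffQuot_fourierMultiplier (N : ℤ) (φ : ℤ → ℂ) :
    Sh N φ = diffQuot N (fourierMultiplier N (shDiffQuotRatio N) φ) := by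
  rw [Sh_eq_fourierMultiplier, diffQuot_fourierMultiplier, mul_comm]
  exact fourierMultiplier_congr (fun k hk => (shDiffQuotRatio_mul_diffQuotSymbol hk).symm) φ

lemma Sh_eq_fourierMultiplier_diffQuot (hN : 0 < N) (hE : Even N) {g : ℤ → ℂ}
    (hg : Function.Periodic g N) :
    Sh N g = fourierMultiplier N (shDiffQuotRatio N) (diffQuot N g) := by
  rw [Sh_eq_diffQuot_fourierMultiplier, diffQuot_fourierMultiplier,
    fourierMultiplier_diffQuot hN hE _ hg, mul_comm]

lemma l2norm_Sh_le_of_norm_diffQuot_le (hN : 0 < N) (hE : Even N) {F : ℤ → ℂ}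
    (hF : Function.Periodic F N) {L : ℝ} (hL : ∀ j, ‖diffQuot N F j‖ ≤ L) :
    l2norm N (Sh N F) ≤ Real.pi / 2 * (√(2 * Real.pi) * L) := by
  rw [Sh_eq_fourierMultiplier_diffQuot hN hE hF]
  refine (l2norm_fourierMultiplier_le hN hE (fun k => norm_shDiffQuotRatio_le) _).trans ?_
  gcongr
  exact l2norm_le_of_norm_le hN hE hL

/-! ### Smoothing estimates for `S_h⁻¹` -/

lemma l2norm_Shinv_mul_Sh_le (hN : 0 < N) (hE : Even N) {F : ℤ → ℂ}
    (hF : Function.Periodic F N) {M L : ℝ} (hM : ∀ j, ‖F j‖ ≤ M)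
    (hL : ∀ j, ‖diffQuot N F j‖ ≤ L) (φ : ℤ → ℂ) :
    l2norm N (Shinv N (F * Sh N φ)) ≤ (M + L) * (Real.pi / 2) * l2norm N φ := by
  set ψ := fourierMultiplier N (shDiffQuotRatio N) φ
  set Fψ := (fun j => F (j - 1)) * ψ
  have hFψ : Function.Periodic Fψ N :=
    Function.Periodic.mul (fun j => by rw [add_sub_right_comm, hF])
      (fourierMultiplier_periodic hN.ne' _ φ)
  calc l2norm N (Shinv N (F * Sh N φ))
      = l2norm N (Shinv N (diffQuot N Fψ) - Shinv N ((fun j => diffQuot N F (j - 1)) * ψ)) := by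
        rw [Sh_eq_diffQuot_fourierMultiplier, mul_diffQuot]
        simp only [Shinv_eq_fourierMultiplier, map_sub, Fψ, ψ]
    _ ≤ l2norm N Fψ + l2norm N ((fun j => diffQuot N F (j - 1)) * ψ) :=
        (l2norm_sub_le _ _ _).trans
          (add_le_add (l2norm_Shinv_diffQuot_le hN hE hFψ) (l2norm_Shinv_le hN hE _))
    _ ≤ M * l2norm N ψ + L * l2norm N ψ :=
        add_le_add (l2norm_mul_le (fun j => hM (j - 1)) ψ) (l2norm_mul_le (fun j => hL (j - 1)) ψ)
    _ = (M + L) * l2norm N ψ := by rw [add_mul]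
    _ ≤ (M + L) * (Real.pi / 2 * l2norm N φ) :=
        mul_le_mul_of_nonneg_left
          (l2norm_fourierMultiplier_le hN hE (fun k => norm_shDiffQuotRatio_le) φ)
          (add_nonneg ((norm_nonneg _).trans (hM 0)) ((norm_nonneg _).trans (hL 0)))
    _ = (M + L) * (Real.pi / 2) * l2norm N φ := by rw [mul_assoc]

lemma sqrt_mul_l2norm_shinvSymbol_le (hN : 0 < N) :
    √N * l2norm N shinvSymbol ≤ √(2 * Real.pi * ∑' k : ℤ, 1 / (k : ℝ) ^ 2) := by
  have hN' : (0 : ℝ) ≤ N := by exact_mod_cast hN.le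
  have hsum : Summable fun k : ℤ => 1 / (k : ℝ) ^ 2 :=
    Real.summable_one_div_int_pow.mpr one_lt_two
  rw [l2norm, ← Real.sqrt_mul hN', ← mul_assoc, mul_hgrid hN.ne']
  gcongr
  simp only [norm_shinvSymbol, ← one_div, one_div_pow, sq_abs]
  exact hsum.sum_le_tsum _ fun k _ => by positivity

lemma l2norm_Shinv_le_of_norm_dft_le (hN : 0 < N) (hE : Even N) {w : ℤ → ℂ} {A : ℝ}
    (hw : ∀ k, ‖dft N w k‖ ≤ A) :
    l2norm N (Shinv N w) ≤ √(2 * Real.pi * ∑' k : ℤ, 1 / (k : ℝ) ^ 2) * A := by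
  have hA : 0 ≤ A := (norm_nonneg _).trans (hw 0)
  calc l2norm N (Shinv N w) = √N * l2norm N (dft N w * shinvSymbol) := by
        rw [Shinv_eq_fourierMultiplier, fourierMultiplier_apply, l2norm_idft hN.le hE,
          mul_comm (dft N w)]
        rfl
    _ ≤ √N * (A * l2norm N shinvSymbol) := by
        gcongr
        exact l2norm_mul_le hw _
    _ = √N * l2norm N shinvSymbol * A := by ring
    _ ≤ √(2 * Real.pi * ∑' k : ℤ, 1 / (k : ℝ) ^ 2) * A := by
        gcongr
        exact sqrt_mul_l2norm_shinvSymbol_le hN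

lemma l2norm_Shinv_Sh_mul_le (hN : 0 < N) (hE : Even N) {F : ℤ → ℂ}
    (hF : Function.Periodic F N) {L : ℝ} (hL : ∀ j, ‖diffQuot N F j‖ ≤ L) (φ : ℤ → ℂ) :
    l2norm N (Shinv N (Sh N F * φ)) ≤
      √(2 * Real.pi * ∑' k : ℤ, 1 / (k : ℝ) ^ 2) *
        ((2 * Real.pi)⁻¹ * (Real.pi / 2 * (√(2 * Real.pi) * L))) * l2norm N φ := by
  refine (l2norm_Shinv_le_of_norm_dft_le hN hE (norm_dft_mul_le hN (Sh N F) φ)).trans ?_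
  rw [mul_assoc √_, mul_assoc (2 * Real.pi)⁻¹]
  have hφ := l2norm_nonneg N φ
  gcongr
  exact l2norm_Sh_le_of_norm_diffQuot_le hN hE hF hL

/-! ### Periodic functions and their samples -/

lemma samples_periodic (hN : N ≠ 0) {f : ℝ → ℂ} (hf : Function.Periodic f (2 * Real.pi)) :
    Function.Periodic (samples N f) N := by
  intro j
  rw [samples, samples, gridPt, Int.cast_add, add_mul, mul_hgrid hN, hf, gridPt]

lemma norm_diffQuot_samples_le {f : ℝ → ℂ} {L : ℝ≥0} (hf : LipschitzWith L f) (N j : ℤ) :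
    ‖diffQuot N (samples N f) j‖ ≤ L := by
  rw [diffQuot, norm_div, Complex.norm_real]
  refine div_le_of_le_mul₀ (norm_nonneg _) L.coe_nonneg ?_
  simpa [samples, gridPt_add_one] using hf.norm_sub_le (gridPt N (j + 1)) (gridPt N j)

lemma periodic_deriv {𝕜 E : Type*} [NontriviallyNormedField 𝕜] [NormedAddCommGroup E]
    [NormedSpace 𝕜 E] {f : 𝕜 → E} {c : 𝕜} (hf : Function.Periodic f c) :
    Function.Periodic (deriv f) c := by
  intro x
  rw [← deriv_comp_add_const, funext hf]

lemma exists_forall_norm_le_of_periodic {E : Type*} [SeminormedAddCommGroup E] {f : ℝ → E}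
    {c : ℝ} (hf : Function.Periodic f c) (hc : c ≠ 0) (hcont : Continuous f) :
    ∃ M, ∀ x, ‖f x‖ ≤ M := by
  obtain ⟨M, hM⟩ := (hf.isBounded_of_continuous hc hcont).exists_norm_le
  exact ⟨M, fun x => hM _ ⟨x, rfl⟩⟩

lemma exists_lipschitzWith_of_periodic {E : Type*} [NormedAddCommGroup E] [NormedSpace ℝ E]
    {f : ℝ → E} {c : ℝ} (hf : Function.Periodic f c) (hc : c ≠ 0) (hdiff : ContDiff ℝ 1 f) :
    ∃ L, LipschitzWith L f := by
  obtain ⟨L, hL⟩ :=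
    exists_forall_norm_le_of_periodic (periodic_deriv hf) hc (hdiff.continuous_deriv le_rfl)
  exact ⟨L.toNNReal, lipschitzWith_of_nnnorm_deriv_le (hdiff.differentiable one_ne_zero) fun x =>
    NNReal.coe_le_coe.mp ((hL x).trans (Real.le_coe_toNNReal L))⟩

lemma IsFilter.exists_abs_le {ρ : ℝ → ℝ} (hρ : IsFilter ρ) :
    ∃ R, ∀ x, |x| ≤ Real.pi → |ρ x| ≤ R := by
  obtain ⟨r, -, hr⟩ := hρ.smooth
  obtain ⟨R, hR⟩ := (isCompact_Icc (a := -Real.pi) (b := Real.pi)).exists_bound_of_continuousOn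
    hr.continuous.continuousOn
  exact ⟨R, fun x hx => hR x (abs_le.mp hx)⟩

theorem Shinv_product_smoothing_general {f : ℝ → ℂ} (hper : Function.Periodic f (2 * Real.pi))
    {L : ℝ≥0} (hf : LipschitzWith L f) {ρ : ℝ → ℝ} {R : ℝ}
    (hρ : ∀ x, |x| ≤ Real.pi → |ρ x| ≤ R) :
    ∃ c : ℝ, 0 < c ∧ ∀ N : ℤ, 2 ≤ N → Even N → ∀ φ : ℤ → ℂ,
      l2norm N (Shinv N (samples N f * Sh N φ) + Shinv N (Sh N (samples N f) * φ) -
        samples N f * φ) ≤ c * l2norm N φ ∧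
      l2norm N (Shinv N (samples N f * φ)) ≤ c * l2norm N φ ∧
      l2norm N (Dh N ρ (Shinv N (samples N f * φ))) ≤ c * l2norm N φ ∧
      l2norm N (Shinv N (samples N f * Sh N φ)) ≤ c * l2norm N φ := by
  obtain ⟨M, hM⟩ := exists_forall_norm_le_of_periodic hper Real.two_pi_pos.ne' hf.continuous
  have hM0 : 0 ≤ M := (norm_nonneg _).trans (hM 0)
  have hR0 : 0 ≤ R := (abs_nonneg _).trans (hρ 0 (by simp [Real.pi_pos.le]))
  let A := (M + L) * (Real.pi / 2)
  let B := √(2 * Real.pi * ∑' k : ℤ, 1 / (k : ℝ) ^ 2) *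
    ((2 * Real.pi)⁻¹ * (Real.pi / 2 * (√(2 * Real.pi) * L)))
  have hA0 : 0 ≤ A := by positivity
  have hB0 : 0 ≤ B := by positivity
  have hRM0 : 0 ≤ R * M := by positivity
  refine ⟨A + B + M + R * M + 1, by positivity, fun N hN hE φ => ?_⟩
  have hN0 : 0 < N := by lia
  have hF := samples_periodic hN0.ne' hper
  have hL := norm_diffQuot_samples_le hf N
  have hfφ : l2norm N (samples N f * φ) ≤ M * l2norm N φ := l2norm_mul_le (fun _ => hM _) φ
  have hA : l2norm N (Shinv N (samples N f * Sh N φ)) ≤ A * l2norm N φ :=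
    l2norm_Shinv_mul_Sh_le hN0 hE hF (fun _ => hM _) hL φ
  have hB : l2norm N (Shinv N (Sh N (samples N f) * φ)) ≤ B * l2norm N φ :=
    l2norm_Shinv_Sh_mul_le hN0 hE hF hL φ
  have hD := (l2norm_Dh_Shinv_le hN0 hE hρ _).trans (mul_le_mul_of_nonneg_left hfφ hR0)
  have hparts := (l2norm_sub_le _ _ _).trans
    (add_le_add ((l2norm_add_le _ _ _).trans (add_le_add hA hB)) hfφ)
  have le_c {a : ℝ} (ha : a ≤ A + B + M + R * M + 1) :=
    mul_le_mul_of_nonneg_right ha (l2norm_nonneg N φ)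
  rw [← add_mul, ← add_mul] at hparts
  rw [← mul_assoc] at hD
  exact ⟨hparts.trans (le_c (by linarith)),
    (l2norm_Shinv_le hN0 hE _).trans (hfφ.trans (le_c (by linarith))),
    hD.trans (le_c (by linarith)), hA.trans (le_c (by linarith))⟩

/-- Lemma 8.14: discrete integration by parts for `S_h⁻¹`, and
`S_h⁻¹(f(α_·)φ)` is a first-order smoothing operator on `φ`. -/
theorem Shinv_product_smoothing (f : ℝ → ℂ)
    (hper : Function.Periodic f (2 * Real.pi)) (hf : ContDiff ℝ 3 f)
    (ρ : ℝ → ℝ) (hρ : IsFilter ρ) :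
    ∃ c : ℝ, 0 < c ∧ ∀ N : ℤ, 2 ≤ N → Even N → ∀ φ : ℤ → ℂ,
      dmean N (fun j => f (gridPt N j) * φ j) = 0 →
      l2norm N (fun i => Shinv N (fun j => f (gridPt N j) * Sh N φ j) i +
          Shinv N (fun j => Sh N (samples N f) j * φ j) i -
          f (gridPt N i) * φ i) ≤ c * l2norm N φ ∧
      l2norm N (Shinv N (fun j => f (gridPt N j) * φ j)) ≤ c * l2norm N φ ∧
      l2norm N (Dh N ρ (Shinv N (fun j => f (gridPt N j) * φ j))) ≤ c * l2norm N φ ∧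
      l2norm N (Shinv N (fun j => f (gridPt N j) * Sh N φ j)) ≤ c * l2norm N φ := by
  obtain ⟨L, hL⟩ :=
    exists_lipschitzWith_of_periodic hper Real.two_pi_pos.ne' (hf.of_le (by norm_num))
  obtain ⟨R, hR⟩ := hρ.exists_abs_le
  obtain ⟨c, hc, hbound⟩ := Shinv_product_smoothing_general hper hL hR
  exact ⟨c, hc, fun N hN hE φ _ => hbound N hN hE φ⟩

end
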